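/- arXiv:2312.15303 — 2 statements merged into one kernel-verified Lean document; each statement's English description precedes it below -/
import Mathlib

section
/- The second Laurent coefficient of B(z,1/2) at z = 0 satisfies b_2 = (1/2)·f″(0) = 2·ζ(3) + (4/3)·(log 2)³ − (π²/3)·log 2, where ζ is the Riemann zeta function. -/
/-- Euler beta function B(z, 1/2). -/
noncomputable def betaHalf (z : ℝ) : ℝ :=
  Real.Gamma z * Real.Gamma (1 / 2) / Real.Gamma (z + 1 / 2)

/-- B(z,1/2) minus its pole 1/z, extended by its limit 2 log 2 at z = 0. -/
noncomputable def f (z : ℝ) : ℝ :=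
  if z = 0 then 2 * Real.log 2 else betaHalf z - 1 / z

/-- The Laurent coefficients of B(z,1/2) at z = 0 (for nonnegative indices). -/
noncomputable def b (n : ℕ) : ℝ := (1 / (n.factorial : ℝ)) * iteratedDeriv n f 0

/-! By Legendre duplication, `log (z B(z, 1/2)) = 2 z log 2 + 2 log Γ(1 + z) - log Γ(1 + 2 z)`.
Expanding the logarithms in the Weierstrass product of `Γ` and interchanging the two summations
gives `log Γ(1 + x) = -γ x + ∑_{k ≥ 2} ζ(k) (-x) ^ k / k` for `|x| < 1`, and `γ` cancels from the
combination above. Differentiating `exp` of the resulting series expresses each Taylor coefficient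
of `z B(z, 1/2)` through the earlier ones, and `b n` is the coefficient of order `n + 1`.
-/

open Real Filter Topology

section PowerSeries

theorem iteratedDeriv_eq_factorial_mul_coeff {𝕜 : Type*} [NontriviallyNormedField 𝕜]
    [CompleteSpace 𝕜] [CharZero 𝕜] {g : 𝕜 → 𝕜} {p : FormalMultilinearSeries 𝕜 𝕜 𝕜} {x : 𝕜}
    (hp : HasFPowerSeriesAt g p x) (n : ℕ) :
    iteratedDeriv n g x = n.factorial * p.coeff n := by
  rw [hp.eq_formalMultilinearSeries hp.analyticAt.hasFPowerSeriesAt,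
    FormalMultilinearSeries.coeff_ofScalars]
  have : (n.factorial : 𝕜) ≠ 0 := mod_cast n.factorial_ne_zero
  field_simp

theorem iteratedDeriv_dslope_self_div_factorial {𝕜 : Type*} [NontriviallyNormedField 𝕜]
    [CompleteSpace 𝕜] [CharZero 𝕜] {g : 𝕜 → 𝕜} {x : 𝕜} (hg : AnalyticAt 𝕜 g x) (n : ℕ) :
    iteratedDeriv n (dslope g x) x / n.factorial =
      iteratedDeriv (n + 1) g x / (n + 1).factorial := by
  obtain ⟨p, hp⟩ := hg
  have hn (k : ℕ) : (k.factorial : 𝕜) ≠ 0 := mod_cast k.factorial_ne_zero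
  rw [iteratedDeriv_eq_factorial_mul_coeff hp.has_fpower_series_dslope_fslope,
    iteratedDeriv_eq_factorial_mul_coeff hp, FormalMultilinearSeries.coeff_fslope,
    mul_div_cancel_left₀ _ (hn n), mul_div_cancel_left₀ _ (hn (n + 1))]

theorem iteratedDeriv_succ_exp_comp {g : ℝ → ℝ} {x : ℝ} {n : ℕ} (hg : ContDiffAt ℝ (n + 1) g x) :
    iteratedDeriv (n + 1) (fun y ↦ exp (g y)) x = ∑ i ∈ Finset.range (n + 1),
      n.choose i * iteratedDeriv i (fun y ↦ exp (g y)) x * iteratedDeriv (n - i + 1) g x := by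
  have hderiv : deriv (fun y ↦ exp (g y)) =ᶠ[𝓝 x] fun y ↦ exp (g y) * deriv g y := by
    filter_upwards [(hg.of_le (m := 1) (by simp)).eventually (by simp)] with y hy
    exact deriv_exp (hy.differentiableAt one_ne_zero)
  rw [iteratedDeriv_succ', hderiv.iteratedDeriv_eq,
    iteratedDeriv_fun_mul (hg.of_le (by simp)).exp (hg.derivWithin le_rfl)]
  simp only [iteratedDeriv_succ']

end PowerSeries

section LogGamma

theorem hasSum_one_div_add_one_pow_riemannZeta {k : ℕ} (hk : 1 < k) :
    HasSum (fun n : ℕ ↦ 1 / ((n : ℝ) + 1) ^ k) (riemannZeta k).re := by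
  have hs : Summable fun n : ℕ ↦ 1 / (n : ℝ) ^ k := summable_one_div_nat_pow.2 hk
  have hzeta : riemannZeta k = ((∑' n : ℕ, 1 / (n : ℝ) ^ k : ℝ) : ℂ) := by
    rw [zeta_nat_eq_tsum_of_gt_one hk]
    push_cast
    rfl
  have hzero : (1 : ℝ) / ((0 : ℕ) : ℝ) ^ k = 0 := by simp [(zero_lt_one.trans hk).ne']
  have := (hasSum_nat_add_iff' 1).2 hs.hasSum
  simpa only [Finset.sum_range_one, hzero, sub_zero, hzeta, Complex.ofReal_re, Nat.cast_add,
    Nat.cast_one] using this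

theorem hasSum_sub_log_one_add {y : ℝ} (hy : |y| < 1) :
    HasSum (fun k : ℕ ↦ (-y) ^ (k + 2) / (k + 2)) (y - log (1 + y)) := by
  have hlog := (hasSum_nat_add_iff' 1).2 (hasSum_pow_div_log_of_abs_lt_one (by rwa [abs_neg]))
  convert! hlog using 1
  · ext k
    push_cast
    ring
  · simp only [sub_neg_eq_add, Finset.sum_range_one, zero_add, pow_one, Nat.cast_zero, div_one]
    ring

theorem one_add_div_natCast_succ_pos {x : ℝ} (hx : -1 < x) (n : ℕ) : 0 < 1 + x / (n + 1) := by
  have : -1 < x / (n + 1) := by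
    rw [lt_div_iff₀ (by positivity)]
    linarith [n.cast_nonneg (α := ℝ)]
  linarith

theorem sum_range_sub_log_one_add_div {x : ℝ} (hx : -1 < x) (n : ℕ) :
    ∑ j ∈ Finset.range (n + 1), (x / (j + 1) - log (1 + x / (j + 1))) =
      BohrMollerup.logGammaSeq (1 + x) n + eulerMascheroniSeq' (n + 1) * x +
        (1 + x) * (log (n + 1) - log n) := by
  have hfactorial : ∑ j ∈ Finset.range (n + 1), log ((j : ℝ) + 1) =
      log (n + 1) + log n.factorial := by
    rw [← log_mul (by positivity) (by positivity), ← log_prod (fun j _ ↦ by positivity)]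
    norm_cast
    rw [Finset.prod_range_add_one_eq_factorial, Nat.factorial_succ]
  have hharmonic : ∑ j ∈ Finset.range (n + 1), x / (j + 1) = harmonic (n + 1) * x := by
    simp [harmonic, Finset.sum_mul, div_eq_inv_mul]
  have hlog (j : ℕ) : log (1 + x + j) = log (1 + x / (j + 1)) + log (j + 1) := by
    rw [← log_mul (one_add_div_natCast_succ_pos hx j).ne' (by positivity)]
    congr 1
    field_simp
    ring
  simp only [BohrMollerup.logGammaSeq, hlog, Finset.sum_sub_distrib, Finset.sum_add_distrib,
    hfactorial, hharmonic, eulerMascheroniSeq', Nat.add_one_ne_zero, if_false, Nat.cast_add,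
    Nat.cast_one]
  ring

-- Logarithm of the Weierstrass product `1 / Γ(1 + x) = e^(γ x) ∏ (1 + x / m) e^(-x / m)`.
theorem hasSum_log_Gamma_one_add_weierstrass {x : ℝ} (hx : -1 < x) :
    HasSum (fun n : ℕ ↦ x / (n + 1) - log (1 + x / (n + 1)))
      (log (Gamma (1 + x)) + eulerMascheroniConstant * x) := by
  have hnonneg (n : ℕ) : 0 ≤ x / (n + 1) - log (1 + x / (n + 1)) := by
    linarith [log_le_sub_one_of_pos (one_add_div_natCast_succ_pos hx n)]
  rw [hasSum_iff_tendsto_nat_of_nonneg hnonneg, ← tendsto_add_atTop_iff_nat 1]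
  simp only [sum_range_sub_log_one_add_div hx]
  have hgamma := BohrMollerup.tendsto_log_gamma (x := 1 + x) (by linarith)
  have heuler := (tendsto_eulerMascheroniSeq'.comp (tendsto_add_atTop_nat 1)).mul_const x
  simpa using (hgamma.add heuler).add (tendsto_log_nat_add_one_sub_log.const_mul (1 + x))

theorem hasSum_sub_log_one_add_div {x : ℝ} (hx : |x| < 1) (n : ℕ) :
    HasSum (fun k : ℕ ↦ (-x / (n + 1)) ^ (k + 2) / (k + 2))
      (x / (n + 1) - log (1 + x / (n + 1))) := by
  have hquot : |x / (n + 1)| < 1 := by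
    rw [abs_div, abs_of_pos (by positivity : (0 : ℝ) < n + 1)]
    exact (div_le_self (abs_nonneg x) (by simp)).trans_lt hx
  simpa only [neg_div] using hasSum_sub_log_one_add hquot

theorem summable_neg_div_pow_div {x : ℝ} (hx : |x| < 1) :
    Summable fun q : ℕ × ℕ ↦ (-x / (q.1 + 1)) ^ (q.2 + 2) / (q.2 + 2) := by
  have hneg : |(-|x|)| < 1 := by rwa [abs_neg, abs_abs]
  -- At `-|x|` all terms are nonnegative, and the rows sum to the Weierstrass series.
  have hmajorant : Summable fun q : ℕ × ℕ ↦ (-(-|x|) / (q.1 + 1)) ^ (q.2 + 2) / (q.2 + 2) := by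
    refine (summable_prod_of_nonneg fun q ↦ ?_).2
      ⟨fun n ↦ (hasSum_sub_log_one_add_div hneg n).summable, ?_⟩
    · rw [neg_neg, Pi.zero_apply]
      positivity
    · simp only [fun n ↦ (hasSum_sub_log_one_add_div hneg n).tsum_eq]
      exact (hasSum_log_Gamma_one_add_weierstrass (neg_lt_neg hx)).summable
  refine hmajorant.of_norm_bounded fun q ↦ le_of_eq ?_
  rw [neg_neg, norm_eq_abs, abs_div, abs_pow, abs_div, abs_neg,
    abs_of_pos (by positivity : (0 : ℝ) < q.1 + 1), abs_of_pos (by positivity : (0 : ℝ) < q.2 + 2)]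

theorem hasSum_log_Gamma_one_add {x : ℝ} (hx : |x| < 1) :
    HasSum (fun k : ℕ ↦ (riemannZeta (k + 2 : ℕ)).re * ((-x) ^ (k + 2) / (k + 2)))
      (log (Gamma (1 + x)) + eulerMascheroniConstant * x) := by
  have hsum := (summable_neg_div_pow_div hx).hasSum
  have hcolumn (k : ℕ) : HasSum (fun n : ℕ ↦ (-x / (n + 1)) ^ (k + 2) / (k + 2))
      ((riemannZeta (k + 2 : ℕ)).re * ((-x) ^ (k + 2) / (k + 2))) := by
    convert! (hasSum_one_div_add_one_pow_riemannZeta (k := k + 2) (by omega)).mul_right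
      ((-x) ^ (k + 2) / (k + 2)) using 2 with n
    rw [div_pow]
    ring
  rw [← (hsum.prod_fiberwise (hasSum_sub_log_one_add_div hx)).unique
    (hasSum_log_Gamma_one_add_weierstrass (abs_lt.1 hx).1)]
  exact ((Equiv.prodComm ℕ ℕ).hasSum_iff.2 hsum).prod_fiberwise hcolumn

end LogGamma

section BetaHalf

/-- The analytic function `z B(z, 1/2)`, with its removable singularity at `z = 0` filled in by
`z Γ(z) = Γ(z + 1)`. -/
noncomputable def mulBetaHalf (z : ℝ) : ℝ :=
  Gamma (z + 1) * Gamma (1 / 2) / Gamma (z + 1 / 2)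

theorem mulBetaHalf_pos {z : ℝ} (hz : -(1 / 2) < z) : 0 < mulBetaHalf z :=
  div_pos (mul_pos (Gamma_pos_of_pos (by linarith)) (Gamma_pos_of_pos (by norm_num)))
    (Gamma_pos_of_pos (by linarith))

theorem mulBetaHalf_zero : mulBetaHalf 0 = 1 := by
  have : Gamma (1 / 2) ≠ 0 := (Gamma_pos_of_pos (by norm_num)).ne'
  simp only [mulBetaHalf, zero_add, Gamma_one, one_mul, div_self this]

theorem mulBetaHalf_mul_Gamma {z : ℝ} (hz : Gamma (z + 1 / 2) ≠ 0) :
    mulBetaHalf z * Gamma (1 + 2 * z) = 2 ^ (2 * z) * Gamma (1 + z) ^ 2 := by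
  have hduplication := Gamma_mul_Gamma_add_half (z + 1 / 2)
  have hpow : (2 : ℝ) ^ (2 * z) * 2 ^ (-(2 * z)) = 1 := by
    rw [← rpow_add two_pos, add_neg_cancel, rpow_zero]
  rw [show z + 1 / 2 + 1 / 2 = 1 + z by ring, show 2 * (z + 1 / 2) = 1 + 2 * z by ring,
    show 1 - (1 + 2 * z) = -(2 * z) by ring] at hduplication
  rw [mulBetaHalf, Gamma_one_half_eq, add_comm z 1, div_mul_eq_mul_div, div_eq_iff hz]
  linear_combination (-Gamma (1 + z) * Gamma (1 + 2 * z) * √π) * hpow -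
    (2 ^ (2 * z) * Gamma (1 + z)) * hduplication

theorem log_mulBetaHalf {z : ℝ} (hz : -(1 / 2) < z) :
    log (mulBetaHalf z) =
      2 * log 2 * z + 2 * log (Gamma (1 + z)) - log (Gamma (1 + 2 * z)) := by
  have hmul := mulBetaHalf_pos hz
  have hone : 0 < Gamma (1 + z) := Gamma_pos_of_pos (by linarith)
  have htwo : 0 < Gamma (1 + 2 * z) := Gamma_pos_of_pos (by linarith)
  have hhalf : 0 < Gamma (z + 1 / 2) := Gamma_pos_of_pos (by linarith)
  have hlog := congrArg log (mulBetaHalf_mul_Gamma hhalf.ne')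
  rw [log_mul hmul.ne' htwo.ne', log_mul (by positivity) (by positivity), log_rpow two_pos,
    log_pow] at hlog
  push_cast at hlog
  linear_combination hlog

/-- The Taylor coefficients of `log (z B(z, 1/2))` at `0`. -/
noncomputable def logMulBetaHalfCoeff : ℕ → ℝ
  | 0 => 0
  | 1 => 2 * log 2
  | k + 2 => (-1) ^ k * (2 - 2 ^ (k + 2)) * (riemannZeta (k + 2 : ℕ)).re / (k + 2)

theorem logMulBetaHalfCoeff_one : logMulBetaHalfCoeff 1 = 2 * log 2 :=
  rfl

theorem logMulBetaHalfCoeff_two : logMulBetaHalfCoeff 2 = -π ^ 2 / 6 := by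
  have hzeta : (riemannZeta 2).re = π ^ 2 / 6 := by
    rw [riemannZeta_two]
    norm_cast
  simp only [logMulBetaHalfCoeff, Nat.reduceAdd, Nat.cast_ofNat, Nat.cast_zero, hzeta]
  ring

theorem logMulBetaHalfCoeff_three : logMulBetaHalfCoeff 3 = 2 * (riemannZeta 3).re := by
  simp only [logMulBetaHalfCoeff, Nat.reduceAdd, Nat.cast_ofNat]
  ring

theorem hasSum_log_mulBetaHalf {z : ℝ} (hz : |z| < 1 / 2) :
    HasSum (fun k ↦ logMulBetaHalfCoeff k * z ^ k) (log (mulBetaHalf z)) := by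
  have hone := hasSum_log_Gamma_one_add (hz.trans one_half_lt_one)
  have htwo := hasSum_log_Gamma_one_add (x := 2 * z) (by rw [abs_mul, abs_two]; linarith)
  rw [log_mulBetaHalf (abs_lt.1 hz).1, ← hasSum_nat_add_iff' 2]
  convert! (hone.mul_left 2).sub htwo using 1
  · ext k
    simp only [logMulBetaHalfCoeff, ← mul_neg, mul_pow]
    ring
  · simp only [Finset.sum_range_succ, Finset.sum_range_zero, logMulBetaHalfCoeff]
    ring

theorem hasFPowerSeriesAt_log_mulBetaHalf :
    HasFPowerSeriesAt (fun z ↦ log (mulBetaHalf z)) (.ofScalars ℝ logMulBetaHalfCoeff) 0 := by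
  rw [hasFPowerSeriesAt_iff]
  filter_upwards [Metric.ball_mem_nhds (0 : ℝ) one_half_pos] with z hz
  simpa only [FormalMultilinearSeries.coeff_ofScalars, smul_eq_mul, mul_comm, zero_add] using
    hasSum_log_mulBetaHalf (by simpa using hz)

theorem iteratedDeriv_log_mulBetaHalf (k : ℕ) :
    iteratedDeriv k (fun z ↦ log (mulBetaHalf z)) 0 = k.factorial * logMulBetaHalfCoeff k := by
  rw [iteratedDeriv_eq_factorial_mul_coeff hasFPowerSeriesAt_log_mulBetaHalf,
    FormalMultilinearSeries.coeff_ofScalars]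

theorem exp_log_mulBetaHalf_eventuallyEq :
    (fun z ↦ exp (log (mulBetaHalf z))) =ᶠ[𝓝 0] mulBetaHalf := by
  filter_upwards [Ioi_mem_nhds (by norm_num : -(1 / 2) < (0 : ℝ))] with z hz
  exact exp_log (mulBetaHalf_pos hz)

theorem analyticAt_mulBetaHalf : AnalyticAt ℝ mulBetaHalf 0 :=
  hasFPowerSeriesAt_log_mulBetaHalf.analyticAt.rexp.congr exp_log_mulBetaHalf_eventuallyEq

theorem iteratedDeriv_succ_mulBetaHalf (n : ℕ) :
    iteratedDeriv (n + 1) mulBetaHalf 0 = ∑ i ∈ Finset.range (n + 1),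
      n.choose i * iteratedDeriv i mulBetaHalf 0 *
        ((n - i + 1).factorial * logMulBetaHalfCoeff (n - i + 1)) := by
  have hlog := hasFPowerSeriesAt_log_mulBetaHalf.analyticAt
  simp only [← exp_log_mulBetaHalf_eventuallyEq.iteratedDeriv_eq,
    iteratedDeriv_succ_exp_comp hlog.contDiffAt, iteratedDeriv_log_mulBetaHalf]

theorem deriv_mulBetaHalf_zero : deriv mulBetaHalf 0 = 2 * log 2 := by
  rw [← iteratedDeriv_one, iteratedDeriv_succ_mulBetaHalf]
  simp [mulBetaHalf_zero, logMulBetaHalfCoeff_one]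

theorem f_eq_dslope_mulBetaHalf : f = dslope mulBetaHalf 0 := by
  ext z
  by_cases hz : z = 0
  · rw [hz, dslope_same, deriv_mulBetaHalf_zero, f, if_pos rfl]
  · rw [dslope_of_ne _ hz, slope_def_field, mulBetaHalf_zero, mulBetaHalf, Gamma_add_one hz, f,
      if_neg hz, betaHalf]
    field_simp
    ring

theorem b_eq_iteratedDeriv_mulBetaHalf (n : ℕ) :
    b n = iteratedDeriv (n + 1) mulBetaHalf 0 / (n + 1).factorial := by
  rw [b, f_eq_dslope_mulBetaHalf, one_div_mul_eq_div,
    iteratedDeriv_dslope_self_div_factorial analyticAt_mulBetaHalf]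

theorem iteratedDeriv_two_mulBetaHalf :
    iteratedDeriv 2 mulBetaHalf 0 = 4 * log 2 ^ 2 - π ^ 2 / 3 := by
  rw [iteratedDeriv_succ_mulBetaHalf]
  simp only [Finset.sum_range_succ, Finset.sum_range_zero, iteratedDeriv_zero, iteratedDeriv_one,
    mulBetaHalf_zero, deriv_mulBetaHalf_zero, Nat.reduceAdd, Nat.reduceSub, Nat.choose,
    Nat.factorial, logMulBetaHalfCoeff_one, logMulBetaHalfCoeff_two]
  push_cast
  ring

theorem iteratedDeriv_three_mulBetaHalf :
    iteratedDeriv 3 mulBetaHalf 0 =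
      12 * (riemannZeta 3).re + 8 * log 2 ^ 3 - 2 * π ^ 2 * log 2 := by
  rw [iteratedDeriv_succ_mulBetaHalf]
  simp only [Finset.sum_range_succ, Finset.sum_range_zero, iteratedDeriv_zero, iteratedDeriv_one,
    mulBetaHalf_zero, deriv_mulBetaHalf_zero, iteratedDeriv_two_mulBetaHalf, Nat.reduceAdd,
    Nat.reduceSub, Nat.choose, Nat.factorial, logMulBetaHalfCoeff_one,
    logMulBetaHalfCoeff_two, logMulBetaHalfCoeff_three]
  push_cast
  ring

end BetaHalf

theorem laurent_coeff_beta_two :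
    b 2 = 1 / 2 * iteratedDeriv 2 f 0 ∧
    b 2 = 2 * (riemannZeta 3).re + 4 / 3 * Real.log 2 ^ 3 - Real.pi ^ 2 / 3 * Real.log 2 := by
  constructor
  · simp [b]
  · rw [b_eq_iteratedDeriv_mulBetaHalf, iteratedDeriv_three_mulBetaHalf, Nat.factorial]
    ring
end

section
/- One has ρ_1 = ∫_ℝ (2·(s − log 2) + 1)·η_log(s) ds = 12·ζ(3)/π² − 2·log 2, where ζ is the Riemann zeta function. -/
open MeasureTheory

/-- The limiting density of the logarithm of smallest denominators. -/
noncomputable def etaLog (s : ℝ) : ℝ :=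
  if s ≤ 0 then 6 / Real.pi ^ 2 * Real.exp (2 * s)
  else if s ≤ Real.log 2 then 6 / Real.pi ^ 2 * (-Real.exp (2 * s) + 2 + 4 * s)
  else 6 / Real.pi ^ 2 * (-Real.exp (2 * s) + 2
    + 2 * Real.exp (2 * s) * Real.sqrt (1 / 4 - Real.exp (-2 * s))
    - 4 * Real.log (1 / 2 + Real.sqrt (1 / 4 - Real.exp (-2 * s))))

/-!
The density satisfies `η' = 2 η - (48 / π²) g`, where `g` vanishes on `(-∞, 0]`, is `s` on
`[0, log 2]` and is `-log x` for `s ≥ log 2`, with `x ≥ 1/2` the larger root of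
`x (1 - x) = exp (-2 s)`. Integrating by parts, `ρ_n = (48 / π²) ∫ (s - log 2) ^ n g(s) ds`.
For `n = 1` the part over `s ≥ log 2` becomes, in the variable `x ∈ [1/2, 1)`, an integral of
logarithms of `x` and `1 - x` against `dx / x` and `dx / (1 - x)`; its primitive is a combination of
dilogarithms and trilogarithms, and `ζ(3)` is the trilogarithm at `1`.
-/

open Filter Topology Set Asymptotics Real

section Calculus

theorem hasDerivAt_of_hasDerivAt_off_countable {E : Type*} [NormedAddCommGroup E]
    [NormedSpace ℝ E] [CompleteSpace E] {f g : ℝ → E} {S : Set ℝ} (hS : S.Countable)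
    (hf : Continuous f) (hg : Continuous g) (hfg : ∀ x ∉ S, HasDerivAt f (g x) x) (x : ℝ) :
    HasDerivAt f (g x) x := by
  have hf_eq : f = fun y => f x + ∫ t in x..y, g t := by
    funext y
    rw [integral_eq_of_hasDerivAt_off_countable f g hS hf.continuousOn
      (fun t ht => hfg t ht.2) (hg.intervalIntegrable x y), add_sub_cancel]
  rw [hf_eq]
  exact (hg.integral_hasStrictDerivAt x x).hasDerivAt.const_add (f x)

theorem isLittleO_sub_pow_exp_pos_mul_atTop (a : ℝ) (n : ℕ) {b : ℝ} (hb : 0 < b) :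
    (fun s : ℝ => (s - a) ^ n) =o[atTop] fun s => exp (b * s) := by
  have hlin : (fun s : ℝ => s - a) =O[atTop] fun s => s :=
    (isBigO_refl _ _).sub (isLittleO_const_id_atTop a).isBigO
  exact (hlin.pow n).trans_isLittleO (isLittleO_pow_exp_pos_mul_atTop n hb)

theorem isLittleO_sub_pow_exp_neg_mul_atBot (a : ℝ) (n : ℕ) {b : ℝ} (hb : 0 < b) :
    (fun s : ℝ => (s - a) ^ n) =o[atBot] fun s => exp (-b * s) := by
  have h := (isLittleO_sub_pow_exp_pos_mul_atTop (-a) n hb).comp_tendsto tendsto_neg_atBot_atTop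
  refine (h.const_mul_left ((-1) ^ n)).congr (fun s => ?_) (fun s => ?_)
  · rw [Function.comp_apply, ← mul_pow]
    ring
  · rw [Function.comp_apply, mul_neg, neg_mul]

theorem integrable_sub_pow_mul_of_isBigO_exp {φ : ℝ → ℝ} {c : ℝ} (hc : 0 < c)
    (hφ : Continuous φ) (hbot : φ =O[atBot] fun s => exp (c * s))
    (htop : φ =O[atTop] fun s => exp (-c * s)) (a : ℝ) (n : ℕ) :
    Integrable fun s => (s - a) ^ n * φ s := by
  have hc2 : 0 < c / 2 := half_pos hc
  have hcont : Continuous fun s => (s - a) ^ n * φ s := by fun_prop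
  refine hcont.locallyIntegrable.integrable_of_isBigO_atBot_atTop
    (g := fun s => exp (c / 2 * s)) (g' := fun s => exp (-(c / 2) * s)) ?_
    ⟨Iic 0, Iic_mem_atBot 0, integrableOn_exp_mul_Iic hc2 0⟩ ?_
    ⟨Ioi 0, Ioi_mem_atTop 0, exp_neg_integrableOn_Ioi 0 hc2⟩
  · refine ((isLittleO_sub_pow_exp_neg_mul_atBot a n hc2).isBigO.mul hbot).congr_right fun s => ?_
    rw [← exp_add]
    ring_nf
  · refine ((isLittleO_sub_pow_exp_pos_mul_atTop a n hc2).isBigO.mul htop).congr_right fun s => ?_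
    rw [← exp_add]
    ring_nf

theorem tendsto_one_sub_nhdsLT_one : Tendsto (fun x : ℝ => 1 - x) (𝓝[<] 1) (𝓝[>] 0) := by
  refine tendsto_nhdsWithin_iff.2 ⟨?_, ?_⟩
  · exact ((continuous_const.sub continuous_id).tendsto' 1 0 (sub_self 1)).mono_left
      nhdsWithin_le_nhds
  · filter_upwards [self_mem_nhdsWithin] with x hx using sub_pos.2 (mem_Iio.1 hx)

end Calculus

section Polylogarithm

variable {𝕜 : Type*} [RCLike 𝕜]

/-- The polylogarithm `Li_k(z) = ∑_{m ≥ 1} z ^ m / m ^ k` of order `k : ℕ`. It is meaningful where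
the series converges absolutely, that is for `‖z‖ < 1`, and for `‖z‖ = 1` if `k ≥ 2`; elsewhere
`tsum` gives `0`. -/
noncomputable def polylog (k : ℕ) (z : 𝕜) : 𝕜 :=
  ∑' n : ℕ, z ^ (n + 1) / ((n : 𝕜) + 1) ^ k

theorem norm_natCast_add_one (n : ℕ) : ‖(n : 𝕜) + 1‖ = n + 1 := by
  exact_mod_cast RCLike.norm_natCast (K := 𝕜) (n + 1)

theorem norm_pow_div_natCast_add_one_pow_le (z : 𝕜) (m n k : ℕ) :
    ‖z ^ m / ((n : 𝕜) + 1) ^ k‖ ≤ ‖z‖ ^ m := by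
  rw [norm_div, norm_pow, norm_pow, norm_natCast_add_one]
  exact div_le_self (by positivity) (one_le_pow₀ (by linarith [n.cast_nonneg (α := ℝ)]))

theorem norm_polylog_le (k : ℕ) {z : 𝕜} (hz : ‖z‖ < 1) : ‖polylog k z‖ ≤ ‖z‖ * (1 - ‖z‖)⁻¹ := by
  refine tsum_of_norm_bounded ((hasSum_geometric_of_lt_one (norm_nonneg z) hz).mul_left ‖z‖)
    fun n => ?_
  simpa only [pow_succ'] using norm_pow_div_natCast_add_one_pow_le z (n + 1) n k

theorem hasDerivAt_polylog_succ (k : ℕ) {z : 𝕜} (hz₀ : z ≠ 0) (hz₁ : ‖z‖ < 1) :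
    HasDerivAt (polylog (k + 1)) (polylog k z / z) z := by
  obtain ⟨r, hzr, hr⟩ := exists_between hz₁
  have hterm (n : ℕ) (y : 𝕜) :
      HasDerivAt (fun y => y ^ (n + 1) / ((n : 𝕜) + 1) ^ (k + 1))
        (y ^ n / ((n : 𝕜) + 1) ^ k) y := by
    refine ((hasDerivAt_pow (n + 1) y).div_const (((n : 𝕜) + 1) ^ (k + 1))).congr_deriv ?_
    have : (n : 𝕜) + 1 ≠ 0 := n.cast_add_one_ne_zero
    push_cast
    field_simp
    ring
  have hderiv : HasDerivAt (polylog (k + 1)) (∑' n : ℕ, z ^ n / ((n : 𝕜) + 1) ^ k) z := by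
    refine hasDerivAt_tsum_of_isPreconnected
      (summable_geometric_of_lt_one ((norm_nonneg z).trans hzr.le) hr) Metric.isOpen_ball
      (convex_ball (0 : 𝕜) r).isPreconnected (fun n y _ => hterm n y) (fun n y hy => ?_)
      (mem_ball_zero_iff.2 hzr) ?_ (mem_ball_zero_iff.2 hzr)
    · exact (norm_pow_div_natCast_add_one_pow_le y n n k).trans
        (pow_le_pow_left₀ (norm_nonneg y) (mem_ball_zero_iff.1 hy).le n)
    · exact .of_norm_bounded ((summable_nat_add_iff 1).2
        (summable_geometric_of_lt_one (norm_nonneg z) hz₁))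
        fun n => norm_pow_div_natCast_add_one_pow_le z (n + 1) n (k + 1)
  refine hderiv.congr_deriv ?_
  rw [polylog, ← tsum_div_const]
  refine tsum_congr fun n => ?_
  field_simp
  rw [pow_succ]

theorem continuousOn_polylog {k : ℕ} (hk : 1 < k) :
    ContinuousOn (polylog k) (Metric.closedBall (0 : 𝕜) 1) := by
  have hsum : Summable fun n : ℕ => 1 / ((n : ℝ) + 1) ^ k := by
    exact_mod_cast (summable_nat_add_iff 1).2 (Real.summable_one_div_nat_pow.2 hk)
  refine continuousOn_tsum (fun n => by fun_prop) hsum fun n z hz => ?_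
  rw [norm_div, norm_pow, norm_pow, norm_natCast_add_one]
  gcongr
  exact pow_le_one₀ (norm_nonneg z) (mem_closedBall_zero_iff.1 hz)

theorem polylog_one_eq_neg_log {x : ℝ} (hx : |x| < 1) : polylog 1 x = -log (1 - x) := by
  simpa only [polylog, pow_one] using (hasSum_pow_div_log_of_abs_lt_one hx).tsum_eq

theorem polylog_apply_one {k : ℕ} (hk : 1 < k) : polylog k (1 : ℝ) = (riemannZeta k).re := by
  have hζ : riemannZeta k = ((∑' n : ℕ, 1 / (n : ℝ) ^ k : ℝ) : ℂ) := by
    rw [zeta_nat_eq_tsum_of_gt_one hk]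
    push_cast
    rfl
  rw [hζ, Complex.ofReal_re, (Real.summable_one_div_nat_pow.2 hk).tsum_eq_zero_add]
  simp [polylog, (zero_lt_one.trans hk).ne']

theorem polylog_two_apply_one : polylog 2 (1 : ℝ) = π ^ 2 / 6 := by
  rw [polylog_apply_one one_lt_two, Nat.cast_ofNat, riemannZeta_two]
  norm_cast

theorem tendsto_polylog_nhdsLT_one {k : ℕ} (hk : 1 < k) :
    Tendsto (polylog k) (𝓝[<] (1 : ℝ)) (𝓝 (polylog k 1)) := by
  refine (continuousOn_polylog hk 1 (by simp)).mono_left ?_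
  rw [← nhdsWithin_Ioo_eq_nhdsLT (zero_lt_one' ℝ), closedBall_eq_Icc]
  exact nhdsWithin_mono _ (Ioo_subset_Icc_self.trans (Icc_subset_Icc (by norm_num) (by norm_num)))

theorem polylog_isBigO_id (k : ℕ) : (polylog k : 𝕜 → 𝕜) =O[𝓝 0] fun z => z := by
  refine .of_bound 2 ?_
  filter_upwards [Metric.ball_mem_nhds (0 : 𝕜) one_half_pos] with z hz
  rw [mem_ball_zero_iff] at hz
  have hinv : (1 - ‖z‖)⁻¹ ≤ 2 := inv_le_of_inv_le₀ two_pos (by linarith)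
  calc ‖polylog k z‖ ≤ ‖z‖ * (1 - ‖z‖)⁻¹ := norm_polylog_le k (by linarith)
    _ ≤ ‖z‖ * 2 := by gcongr
    _ = 2 * ‖z‖ := mul_comm _ _

theorem tendsto_polylog_nhds_zero (k : ℕ) : Tendsto (polylog k : 𝕜 → 𝕜) (𝓝 0) (𝓝 0) :=
  (polylog_isBigO_id k).trans_tendsto tendsto_id

theorem tendsto_log_mul_polylog_nhdsGT_zero (k : ℕ) :
    Tendsto (fun x : ℝ => log x * polylog k x) (𝓝[>] 0) (𝓝 0) := by
  have hlog : Tendsto (fun x : ℝ => log x * x) (𝓝[>] 0) (𝓝 0) := by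
    simpa only [rpow_one] using tendsto_log_mul_rpow_nhdsGT_zero one_pos
  exact ((isBigO_refl log _).mul
    ((polylog_isBigO_id k).mono nhdsWithin_le_nhds)).trans_tendsto hlog

theorem tendsto_log_mul_log_one_sub_nhdsGT_zero :
    Tendsto (fun x : ℝ => log x * log (1 - x)) (𝓝[>] 0) (𝓝 0) := by
  have h := (tendsto_log_mul_polylog_nhdsGT_zero 1).neg
  rw [neg_zero] at h
  refine h.congr' ?_
  filter_upwards [Ioo_mem_nhdsGT one_pos] with x hx
  rw [polylog_one_eq_neg_log (abs_lt.2 ⟨by linarith [hx.1], hx.2⟩), mul_neg, neg_neg]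

theorem hasDerivAt_polylog_two {x : ℝ} (hx : x ∈ Ioo 0 1) :
    HasDerivAt (polylog 2) (-log (1 - x) / x) x := by
  have habs : |x| < 1 := abs_lt.2 ⟨by linarith [hx.1], hx.2⟩
  simpa only [polylog_one_eq_neg_log habs] using hasDerivAt_polylog_succ 1 hx.1.ne' habs

/-- The primitive of `log x * log (1 - x) / x` on `(0, 1)` that vanishes at `0⁺`. -/
noncomputable def logLogPrimitive (x : ℝ) : ℝ :=
  polylog 3 x - log x * polylog 2 x

theorem hasDerivAt_logLogPrimitive {x : ℝ} (hx : x ∈ Ioo 0 1) :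
    HasDerivAt logLogPrimitive (log x * log (1 - x) / x) x := by
  have habs : |x| < 1 := abs_lt.2 ⟨by linarith [hx.1], hx.2⟩
  refine ((hasDerivAt_polylog_succ 2 hx.1.ne' habs).sub
    ((hasDerivAt_log hx.1.ne').mul (hasDerivAt_polylog_two hx))).congr_deriv ?_
  ring

theorem tendsto_logLogPrimitive_nhdsGT_zero : Tendsto logLogPrimitive (𝓝[>] 0) (𝓝 0) := by
  unfold logLogPrimitive
  simpa only [sub_zero] using ((tendsto_polylog_nhds_zero 3).mono_left nhdsWithin_le_nhds).sub
    (tendsto_log_mul_polylog_nhdsGT_zero 2)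

theorem tendsto_log_nhdsLT_one : Tendsto log (𝓝[<] 1) (𝓝 0) := by
  simpa only [log_one] using (continuousAt_log one_ne_zero).tendsto.mono_left nhdsWithin_le_nhds

theorem tendsto_logLogPrimitive_nhdsLT_one :
    Tendsto logLogPrimitive (𝓝[<] 1) (𝓝 (riemannZeta 3).re) := by
  have h := (tendsto_polylog_nhdsLT_one (k := 3) (by norm_num)).sub
    (tendsto_log_nhdsLT_one.mul (tendsto_polylog_nhdsLT_one one_lt_two))
  rwa [zero_mul, sub_zero, polylog_apply_one (by norm_num), Nat.cast_ofNat] at h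

end Polylogarithm

section LargerRoot

/-- For `s ≥ log 2`, the larger root of `x * (1 - x) = exp (-2 * s)`. For `s ≤ log 2` the square
root is that of a nonpositive number, so the value is `1 / 2`. -/
noncomputable def largerRoot (s : ℝ) : ℝ :=
  1 / 2 + √(1 / 4 - exp (-2 * s))

theorem exp_neg_two_mul_log_two : exp (-2 * log 2) = 1 / 4 := by
  rw [mul_comm, exp_mul, exp_log two_pos]
  norm_num

theorem largerRoot_log_two : largerRoot (log 2) = 1 / 2 := by
  rw [largerRoot, exp_neg_two_mul_log_two, sub_self, sqrt_zero, add_zero]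

theorem exp_neg_two_mul_lt {s : ℝ} (hs : log 2 < s) : exp (-2 * s) < 1 / 4 := by
  rw [← exp_neg_two_mul_log_two, exp_lt_exp]
  linarith

theorem continuous_largerRoot : Continuous largerRoot := by
  unfold largerRoot
  fun_prop

theorem half_le_largerRoot (s : ℝ) : 1 / 2 ≤ largerRoot s :=
  le_add_of_nonneg_right (sqrt_nonneg _)

theorem largerRoot_pos (s : ℝ) : 0 < largerRoot s :=
  one_half_pos.trans_le (half_le_largerRoot s)

theorem half_lt_largerRoot {s : ℝ} (hs : log 2 < s) : 1 / 2 < largerRoot s :=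
  lt_add_of_pos_right _ (sqrt_pos.2 (sub_pos.2 (exp_neg_two_mul_lt hs)))

theorem largerRoot_lt_one (s : ℝ) : largerRoot s < 1 := by
  have : √(1 / 4 - exp (-2 * s)) < 1 / 2 :=
    (sqrt_lt' one_half_pos).2 (by linarith [exp_pos (-2 * s)])
  rw [largerRoot]
  linarith

theorem largerRoot_mem_Ioo (s : ℝ) : largerRoot s ∈ Ioo 0 1 :=
  ⟨largerRoot_pos s, largerRoot_lt_one s⟩

theorem largerRoot_mul_one_sub {s : ℝ} (hs : log 2 < s) :
    largerRoot s * (1 - largerRoot s) = exp (-2 * s) := by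
  have hsq := sq_sqrt (sub_pos.2 (exp_neg_two_mul_lt hs)).le
  rw [largerRoot]
  linear_combination -hsq

theorem log_largerRoot_add_log_one_sub {s : ℝ} (hs : log 2 < s) :
    log (largerRoot s) + log (1 - largerRoot s) = -2 * s := by
  rw [← log_mul (largerRoot_pos s).ne' (sub_pos.2 (largerRoot_lt_one s)).ne',
    largerRoot_mul_one_sub hs, log_exp]

theorem hasDerivAt_largerRoot {s : ℝ} (hs : log 2 < s) :
    HasDerivAt largerRoot
      (2 * largerRoot s * (1 - largerRoot s) / (2 * largerRoot s - 1)) s := by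
  have hexp : HasDerivAt (fun t : ℝ => exp (-2 * t)) (exp (-2 * s) * (-2 * 1)) s :=
    ((hasDerivAt_id s).const_mul (-2)).exp
  refine (((hexp.const_sub (1 / 4)).sqrt
    (sub_pos.2 (exp_neg_two_mul_lt hs)).ne').const_add (1 / 2)).congr_deriv ?_
  have hsqrt : √(1 / 4 - exp (-2 * s)) = largerRoot s - 1 / 2 := by rw [largerRoot]; ring
  rw [hsqrt, ← largerRoot_mul_one_sub hs]
  have : largerRoot s - 1 / 2 ≠ 0 := by linarith [half_lt_largerRoot hs]
  have : 2 * largerRoot s - 1 ≠ 0 := by linarith [half_lt_largerRoot hs]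
  field_simp

theorem tendsto_largerRoot_atTop : Tendsto largerRoot atTop (𝓝[<] 1) := by
  refine tendsto_nhdsWithin_iff.2 ⟨?_, .of_forall largerRoot_lt_one⟩
  have hexp : Tendsto (fun s : ℝ => exp (-2 * s)) atTop (𝓝 0) :=
    tendsto_exp_atBot.comp (tendsto_id.const_mul_atTop_of_neg (by norm_num))
  have hsqrt : √(1 / 4 - 0 : ℝ) = 1 / 2 := by
    rw [sub_zero, show (1 / 4 : ℝ) = (1 / 2) ^ 2 by norm_num, sqrt_sq one_half_pos.le]
  have h := (hexp.const_sub (1 / 4)).sqrt.const_add (1 / 2)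
  rwa [hsqrt, add_halves] at h

theorem inv_largerRoot_sub_one_nonneg (s : ℝ) : 0 ≤ (largerRoot s)⁻¹ - 1 :=
  sub_nonneg.2 ((one_lt_inv₀ (largerRoot_pos s)).2 (largerRoot_lt_one s)).le

theorem inv_largerRoot_sub_one_isBigO :
    (fun s => (largerRoot s)⁻¹ - 1) =O[atTop] fun s => exp (-2 * s) := by
  refine .of_bound 4 ?_
  filter_upwards [eventually_gt_atTop (log 2)] with s hs
  have hX := half_le_largerRoot s
  rw [norm_of_nonneg (inv_largerRoot_sub_one_nonneg s), norm_of_nonneg (exp_pos _).le,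
    ← largerRoot_mul_one_sub hs]
  have hinv : (largerRoot s)⁻¹ - 1 = (1 - largerRoot s) / largerRoot s := by
    field_simp [(largerRoot_pos s).ne']
  rw [hinv, div_le_iff₀ (largerRoot_pos s)]
  have hsq : 1 ≤ 4 * largerRoot s ^ 2 := by nlinarith
  calc 1 - largerRoot s ≤ (1 - largerRoot s) * (4 * largerRoot s ^ 2) :=
        le_mul_of_one_le_right (sub_pos.2 (largerRoot_lt_one s)).le hsq
    _ = 4 * (largerRoot s * (1 - largerRoot s)) * largerRoot s := by ring

theorem log_largerRoot_isBigO :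
    (fun s => log (largerRoot s)) =O[atTop] fun s => exp (-2 * s) := by
  refine (IsBigO.of_norm_le fun s => ?_).trans inv_largerRoot_sub_one_isBigO
  rw [norm_of_nonpos (log_nonpos (largerRoot_pos s).le (largerRoot_lt_one s).le), ← log_inv]
  exact log_le_sub_one_of_pos (inv_pos.2 (largerRoot_pos s))

end LargerRoot

section EtaSource

/-- The inhomogeneity `g` of the differential equation `η' = 2 η - (48 / π²) g` of `η = etaLog`. -/
noncomputable def etaSource (s : ℝ) : ℝ :=
  if s ≤ 0 then 0 else if s ≤ log 2 then s else -log (largerRoot s)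

theorem etaSource_of_nonpos {s : ℝ} (hs : s ≤ 0) : etaSource s = 0 :=
  if_pos hs

theorem etaSource_of_mem_Ioc {s : ℝ} (hs : s ∈ Ioc 0 (log 2)) : etaSource s = s := by
  rw [etaSource, if_neg hs.1.not_ge, if_pos hs.2]

theorem etaSource_of_log_two_lt {s : ℝ} (hs : log 2 < s) :
    etaSource s = -log (largerRoot s) := by
  rw [etaSource, if_neg ((log_pos one_lt_two).trans hs).not_ge, if_neg hs.not_ge]

theorem etaLog_of_nonpos {s : ℝ} (hs : s ≤ 0) : etaLog s = 6 / π ^ 2 * exp (2 * s) :=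
  if_pos hs

theorem etaLog_of_mem_Ioc {s : ℝ} (hs : s ∈ Ioc 0 (log 2)) :
    etaLog s = 6 / π ^ 2 * (-exp (2 * s) + 2 + 4 * s) := by
  rw [etaLog, if_neg hs.1.not_ge, if_pos hs.2]

theorem etaLog_of_log_two_lt {s : ℝ} (hs : log 2 < s) :
    etaLog s = 6 / π ^ 2 * (2 - 2 * (largerRoot s)⁻¹ - 4 * log (largerRoot s)) := by
  have hexp : exp (2 * s) * (largerRoot s * (1 - largerRoot s)) = 1 := by
    rw [largerRoot_mul_one_sub hs, ← exp_add, neg_mul, add_neg_cancel, exp_zero]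
  have hinv : exp (2 * s) * (1 - largerRoot s) = (largerRoot s)⁻¹ :=
    eq_inv_of_mul_eq_one_left (by linear_combination hexp)
  have hsqrt : √(1 / 4 - exp (-2 * s)) = largerRoot s - 1 / 2 := by rw [largerRoot]; ring
  rw [etaLog, if_neg ((log_pos one_lt_two).trans hs).not_ge, if_neg hs.not_ge, hsqrt,
    add_sub_cancel]
  linear_combination -12 / π ^ 2 * hinv

theorem continuous_etaSource : Continuous etaSource := by
  refine continuous_const.if_le (continuous_id.if_le (continuous_largerRoot.log
    fun s => (largerRoot_pos s).ne').neg continuous_id continuous_const ?_)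
    continuous_id continuous_const ?_
  · rintro s rfl
    rw [largerRoot_log_two, one_div, log_inv, neg_neg]
    rfl
  · rintro s rfl
    rw [if_pos (log_nonneg one_le_two)]

theorem continuous_etaLog : Continuous etaLog := by
  have hlog : Continuous fun s : ℝ => log (1 / 2 + √(1 / 4 - exp (-2 * s))) :=
    continuous_largerRoot.log fun s => (largerRoot_pos s).ne'
  refine Continuous.if_le (by fun_prop) (.if_le (by fun_prop) (by fun_prop) continuous_id
    continuous_const ?_) continuous_id continuous_const ?_
  · rintro s rfl
    rw [exp_neg_two_mul_log_two, sub_self, sqrt_zero, add_zero, one_div, log_inv]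
    ring
  · rintro s rfl
    rw [if_pos (log_nonneg one_le_two), mul_zero, exp_zero]
    ring

theorem hasDerivAt_etaLog (s : ℝ) :
    HasDerivAt etaLog (2 * etaLog s - 48 / π ^ 2 * etaSource s) s := by
  refine hasDerivAt_of_hasDerivAt_off_countable
    (g := fun s => 2 * etaLog s - 48 / π ^ 2 * etaSource s) (Set.toFinite {0, log 2}).countable
    continuous_etaLog ((continuous_etaLog.const_mul 2).sub (continuous_etaSource.const_mul _))
    (fun s hs => ?_) s
  have hexp : HasDerivAt (fun t : ℝ => exp (2 * t)) (exp (2 * s) * (2 * 1)) s :=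
    ((hasDerivAt_id s).const_mul 2).exp
  obtain ⟨hs₀, hs₂⟩ : s ≠ 0 ∧ s ≠ log 2 := by simpa using hs
  rcases lt_or_gt_of_ne hs₀ with hneg | hpos
  · have hη : etaLog =ᶠ[𝓝 s] fun t => 6 / π ^ 2 * exp (2 * t) := by
      filter_upwards [Iio_mem_nhds hneg] with t ht using etaLog_of_nonpos (le_of_lt ht)
    refine ((hexp.const_mul (6 / π ^ 2)).congr_of_eventuallyEq hη).congr_deriv ?_
    rw [etaLog_of_nonpos hneg.le, etaSource_of_nonpos hneg.le]
    ring
  rcases lt_or_gt_of_ne hs₂ with hlt | hgt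
  · have hη : etaLog =ᶠ[𝓝 s] fun t => 6 / π ^ 2 * (-exp (2 * t) + 2 + 4 * t) := by
      filter_upwards [Ioo_mem_nhds hpos hlt] with t ht
        using etaLog_of_mem_Ioc (Ioo_subset_Ioc_self ht)
    refine ((((hexp.fun_neg.add_const 2).fun_add ((hasDerivAt_id s).const_mul 4)).const_mul
      (6 / π ^ 2)).congr_of_eventuallyEq hη).congr_deriv ?_
    rw [etaLog_of_mem_Ioc ⟨hpos, hlt.le⟩, etaSource_of_mem_Ioc ⟨hpos, hlt.le⟩]
    ring
  · have hη : etaLog =ᶠ[𝓝 s]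
        fun t => 6 / π ^ 2 * (2 - 2 * (largerRoot t)⁻¹ - 4 * log (largerRoot t)) := by
      filter_upwards [Ioi_mem_nhds hgt] with t ht using etaLog_of_log_two_lt ht
    have hX := (largerRoot_pos s).ne'
    have hX' : 2 * largerRoot s - 1 ≠ 0 := by linarith [half_lt_largerRoot hgt]
    have hroot := hasDerivAt_largerRoot hgt
    refine (((((hroot.fun_inv hX).const_mul 2).const_sub 2).fun_sub
      ((hroot.log hX).const_mul 4)).const_mul (6 / π ^ 2)
      |>.congr_of_eventuallyEq hη).congr_deriv ?_
    rw [etaLog_of_log_two_lt hgt, etaSource_of_log_two_lt hgt]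
    field_simp
    ring

theorem etaSource_isBigO_atTop : etaSource =O[atTop] fun s => exp (-2 * s) := by
  refine log_largerRoot_isBigO.neg_left.congr' ?_ .rfl
  filter_upwards [eventually_gt_atTop (log 2)] with s hs using (etaSource_of_log_two_lt hs).symm

theorem etaSource_isBigO_atBot : etaSource =O[atBot] fun s => exp (2 * s) := by
  refine (isBigO_zero _ _).congr' ?_ .rfl
  filter_upwards [eventually_le_atBot 0] with s hs using (etaSource_of_nonpos hs).symm

theorem etaLog_isBigO_atTop : etaLog =O[atTop] fun s => exp (-2 * s) := by
  refine (((inv_largerRoot_sub_one_isBigO.const_mul_left (-2)).sub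
    (log_largerRoot_isBigO.const_mul_left 4)).const_mul_left (6 / π ^ 2)).congr' ?_ .rfl
  filter_upwards [eventually_gt_atTop (log 2)] with s hs
  rw [etaLog_of_log_two_lt hs]
  ring

theorem etaLog_isBigO_atBot : etaLog =O[atBot] fun s => exp (2 * s) := by
  refine ((isBigO_refl _ _).const_mul_left (6 / π ^ 2)).congr' ?_ .rfl
  filter_upwards [eventually_le_atBot 0] with s hs using (etaLog_of_nonpos hs).symm

theorem integrable_sub_pow_mul_etaLog (a : ℝ) (n : ℕ) :
    Integrable fun s => (s - a) ^ n * etaLog s :=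
  integrable_sub_pow_mul_of_isBigO_exp two_pos continuous_etaLog etaLog_isBigO_atBot
    etaLog_isBigO_atTop a n

theorem integrable_sub_pow_mul_etaSource (a : ℝ) (n : ℕ) :
    Integrable fun s => (s - a) ^ n * etaSource s :=
  integrable_sub_pow_mul_of_isBigO_exp two_pos continuous_etaSource etaSource_isBigO_atBot
    etaSource_isBigO_atTop a n

theorem integral_two_mul_sub_pow_add_mul_etaLog (a : ℝ) (n : ℕ) :
    ∫ s, (2 * (s - a) ^ n + n * (s - a) ^ (n - 1)) * etaLog s =
      48 / π ^ 2 * ∫ s, (s - a) ^ n * etaSource s := by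
  have hη := integrable_sub_pow_mul_etaLog a n
  have hη' : Integrable fun s => n * (s - a) ^ (n - 1) * etaLog s := by
    simpa only [mul_assoc] using (integrable_sub_pow_mul_etaLog a (n - 1)).const_mul (n : ℝ)
  have hg := (integrable_sub_pow_mul_etaSource a n).const_mul (48 / π ^ 2)
  have hpow (s : ℝ) : HasDerivAt (fun s => (s - a) ^ n) (n * (s - a) ^ (n - 1)) s := by
    simpa using ((hasDerivAt_id s).sub_const a).fun_pow n
  have hsplit (s : ℝ) : (s - a) ^ n * (2 * etaLog s - 48 / π ^ 2 * etaSource s) =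
      2 * ((s - a) ^ n * etaLog s) - 48 / π ^ 2 * ((s - a) ^ n * etaSource s) := by ring
  have hparts : ∫ s, (s - a) ^ n * (2 * etaLog s - 48 / π ^ 2 * etaSource s) =
      -∫ s, n * (s - a) ^ (n - 1) * etaLog s := by
    refine integral_mul_deriv_eq_deriv_mul_of_integrable (fun s _ => hpow s)
      (fun s _ => hasDerivAt_etaLog s) ?_ hη' hη
    exact ((hη.const_mul 2).sub hg).congr (.of_forall fun s => (hsplit s).symm)
  simp_rw [hsplit] at hparts
  rw [integral_sub (hη.const_mul 2) hg, integral_const_mul (48 / π ^ 2)] at hparts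
  simp_rw [add_mul, mul_assoc (2 : ℝ)]
  rw [integral_add (hη.const_mul 2) hη']
  linear_combination hparts

end EtaSource

section FirstMoment

/-- A primitive of `(s - log 2) * etaSource s` on `[log 2, ∞)`, in the variable `x = largerRoot s`.
Both `polylog 2 (1 - x)` and `-polylog 2 x - log x * log (1 - x)` are primitives of
`log x / (1 - x)`; taking their mean makes the dilogarithms cancel at `x = 1 / 2`. -/
noncomputable def momentPrimitive (x : ℝ) : ℝ :=
  (logLogPrimitive x - logLogPrimitive (1 - x)
    + log 2 * (polylog 2 (1 - x) - polylog 2 x - log x * log (1 - x))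
    - log x * (log x * log (1 - x)) - log x ^ 3 / 3 - log 2 * log x ^ 2) / 4

theorem hasDerivAt_momentPrimitive {x : ℝ} (hx : x ∈ Ioo 0 1) :
    HasDerivAt momentPrimitive
      ((log x + log (1 - x) + 2 * log 2) * log x * (2 * x - 1) / (4 * x * (1 - x))) x := by
  have hx₀ : x ≠ 0 := hx.1.ne'
  have hx₁ : 1 - x ≠ 0 := (sub_pos.2 hx.2).ne'
  have hx' : 1 - x ∈ Ioo 0 1 := ⟨sub_pos.2 hx.2, sub_lt_self 1 hx.1⟩
  have hsub : HasDerivAt (fun x : ℝ => 1 - x) (-1) x := (hasDerivAt_id x).const_sub 1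
  have hlog := hasDerivAt_log hx₀
  have hloglog := hlog.fun_mul (hsub.log hx₁)
  have hpoly := ((hasDerivAt_polylog_two hx').comp x hsub).fun_sub (hasDerivAt_polylog_two hx)
  have hlogLog :=
    (hasDerivAt_logLogPrimitive hx).fun_sub ((hasDerivAt_logLogPrimitive hx').comp x hsub)
  refine (((((hlogLog.fun_add ((hpoly.fun_sub hloglog).const_mul (log 2))).fun_sub
    (hlog.fun_mul hloglog)).fun_sub ((hlog.fun_pow 3).div_const 3)).fun_sub
    ((hlog.fun_pow 2).const_mul (log 2))).div_const 4).congr_deriv ?_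
  rw [sub_sub_cancel]
  push_cast
  field_simp
  ring

theorem tendsto_momentPrimitive_nhdsLT_one :
    Tendsto momentPrimitive (𝓝[<] 1) (𝓝 (((riemannZeta 3).re - log 2 * (π ^ 2 / 6)) / 4)) := by
  have hflip := tendsto_one_sub_nhdsLT_one
  have hlog := tendsto_log_nhdsLT_one
  have hloglog : Tendsto (fun x : ℝ => log x * log (1 - x)) (𝓝[<] 1) (𝓝 0) := by
    refine (tendsto_log_mul_log_one_sub_nhdsGT_zero.comp hflip).congr fun x => ?_
    rw [Function.comp_apply, sub_sub_cancel, mul_comm]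
  have hpoly₀ := ((tendsto_polylog_nhds_zero (𝕜 := ℝ) 2).mono_left nhdsWithin_le_nhds).comp hflip
  have hpoly₁ := tendsto_polylog_nhdsLT_one one_lt_two
  have h := (((((tendsto_logLogPrimitive_nhdsLT_one.sub
    (tendsto_logLogPrimitive_nhdsGT_zero.comp hflip)).add
    (((hpoly₀.sub hpoly₁).sub hloglog).const_mul (log 2))).sub (hlog.mul hloglog)).sub
    ((hlog.pow 3).div_const 3)).sub ((hlog.pow 2).const_mul (log 2))).div_const 4
  rw [polylog_two_apply_one] at h
  have hlim : ((riemannZeta 3).re - log 2 * (π ^ 2 / 6)) / 4 =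
      ((riemannZeta 3).re - 0 + log 2 * (0 - π ^ 2 / 6 - 0) - 0 * 0 - 0 ^ 3 / 3
        - log 2 * 0 ^ 2) / 4 := by ring
  rwa [hlim]

theorem momentPrimitive_one_half : momentPrimitive (1 / 2) = -(log 2 ^ 3 / 6) := by
  rw [momentPrimitive, show (1 : ℝ) - 1 / 2 = 1 / 2 by norm_num, one_div, log_inv]
  ring

theorem hasDerivAt_momentPrimitive_largerRoot {s : ℝ} (hs : log 2 < s) :
    HasDerivAt (fun s => momentPrimitive (largerRoot s)) ((s - log 2) * etaSource s) s := by
  refine ((hasDerivAt_momentPrimitive (largerRoot_mem_Ioo s)).comp s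
    (hasDerivAt_largerRoot hs)).congr_deriv ?_
  rw [etaSource_of_log_two_lt hs, log_largerRoot_add_log_one_sub hs]
  have h₀ : largerRoot s ≠ 0 := (largerRoot_pos s).ne'
  have h₁ : 1 - largerRoot s ≠ 0 := (sub_pos.2 (largerRoot_lt_one s)).ne'
  have h₂ : 2 * largerRoot s - 1 ≠ 0 := by linarith [half_lt_largerRoot hs]
  field_simp
  ring

theorem integral_Ioi_log_two_sub_mul_etaSource :
    ∫ s in Ioi (log 2), (s - log 2) * etaSource s =
      ((riemannZeta 3).re - log 2 * (π ^ 2 / 6)) / 4 + log 2 ^ 3 / 6 := by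
  have hcont : ContinuousAt (fun s => momentPrimitive (largerRoot s)) (log 2) :=
    ContinuousAt.comp (hasDerivAt_momentPrimitive (largerRoot_mem_Ioo _)).continuousAt
      continuous_largerRoot.continuousAt
  have hint : Integrable fun s => (s - log 2) * etaSource s := by
    simpa only [pow_one] using integrable_sub_pow_mul_etaSource (log 2) 1
  rw [integral_Ioi_of_hasDerivAt_of_tendsto hcont.continuousWithinAt
    (fun s hs => hasDerivAt_momentPrimitive_largerRoot hs) hint.integrableOn
    (tendsto_momentPrimitive_nhdsLT_one.comp tendsto_largerRoot_atTop),
    largerRoot_log_two, momentPrimitive_one_half, sub_neg_eq_add]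

theorem integral_Ioc_log_two_sub_mul_etaSource :
    ∫ s in Ioc 0 (log 2), (s - log 2) * etaSource s = -(log 2 ^ 3 / 6) := by
  have hderiv (s : ℝ) : HasDerivAt (fun s => s ^ 3 / 3 - log 2 * (s ^ 2 / 2))
      ((s - log 2) * s) s := by
    refine (((hasDerivAt_pow 3 s).div_const 3).fun_sub
      (((hasDerivAt_pow 2 s).div_const 2).const_mul (log 2))).congr_deriv ?_
    push_cast
    ring
  have hcont : Continuous fun s : ℝ => (s - log 2) * s := by fun_prop
  rw [setIntegral_congr_fun (g := fun s => (s - log 2) * s) measurableSet_Ioc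
      fun s hs => by simp only [etaSource_of_mem_Ioc hs],
    ← intervalIntegral.integral_of_le (log_nonneg one_le_two),
    intervalIntegral.integral_eq_sub_of_hasDerivAt (fun s _ => hderiv s)
      (hcont.intervalIntegrable _ _)]
  ring

theorem integral_sub_log_two_mul_etaSource :
    ∫ s, (s - log 2) * etaSource s = ((riemannZeta 3).re - log 2 * (π ^ 2 / 6)) / 4 := by
  have hint : Integrable fun s => (s - log 2) * etaSource s := by
    simpa only [pow_one] using integrable_sub_pow_mul_etaSource (log 2) 1
  have hvanish : ∀ s ∉ Ioi (0 : ℝ), (s - log 2) * etaSource s = 0 := fun s hs => by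
    rw [etaSource_of_nonpos (notMem_Ioi.1 hs), mul_zero]
  rw [← setIntegral_eq_integral_of_forall_compl_eq_zero hvanish,
    ← Ioc_union_Ioi_eq_Ioi (log_nonneg one_le_two),
    setIntegral_union (Ioc_disjoint_Ioi le_rfl) measurableSet_Ioi hint.integrableOn
      hint.integrableOn,
    integral_Ioc_log_two_sub_mul_etaSource, integral_Ioi_log_two_sub_mul_etaSource,
    neg_add_cancel_comm_assoc]

end FirstMoment

theorem rho_one :
    (∫ s : ℝ, (2 * (s - Real.log 2) + 1) * etaLog s) =
      12 * (riemannZeta 3).re / Real.pi ^ 2 - 2 * Real.log 2 := by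
  have hparts : ∫ s, (2 * (s - log 2) + 1) * etaLog s =
      48 / π ^ 2 * ∫ s, (s - log 2) * etaSource s := by
    simpa using integral_two_mul_sub_pow_add_mul_etaLog (log 2) 1
  rw [hparts, integral_sub_log_two_mul_etaSource]
  field_simp
  ring
end
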